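/- arXiv:1607.01206 — 3 statements merged into one kernel-verified Lean document; each statement's English description precedes it below -/
import Mathlib

section
/- Let M = (M_k) and Ṁ = (Ṁ_k) be weight sequences. Then the following are equivalent: (a) there exists C ≥ 1 such that h_M(t) ≤ h_{Ṁ}(Ct)^2 for all t > 0; (b) there exists C ≥ 1 such that M_{k+j} ≤ C^{k+j} Ṁ_j Ṁ_k for all j, k ∈ ℕ. -/
/-! The forward direction inverts the transform `M ↦ h_M`: since `μ` is increasing, the terms
`M k * t ^ k` with `t = 1 / μ n` decrease up to `k = n` and increase afterwards, so the infimum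
defining `h_M (1 / μ n)` is attained at `k = n` (`weight_term_min`). Evaluating the hypothesis at this
`t` with `n = k + j`, bounding the two factors `h_N (C t)` by their `j`-th and `k`-th terms, and
cancelling `t ^ n` gives the inequality for the sequences.

Conversely, `h_M t ≤ M (k + j) * t ^ (k + j)` is at most the product of the `j`-th and `k`-th terms of
`h_N (C t)`; take the infimum over `j` and `k` independently. -/

open Filter

/-- `h_M(t) = inf_k M_k t^k` (for `t > 0`; `h_M(0) := 0`). -/
noncomputable def hFun (M : ℕ → ℝ) (t : ℝ) : ℝ := ⨅ k : ℕ, M k * t ^ k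

lemma hFun_le {M : ℕ → ℝ} (hM : ∀ k, 0 < M k) {t : ℝ} (ht : 0 < t) (k : ℕ) :
    hFun M t ≤ M k * t ^ k :=
  ciInf_le ⟨0, by rintro _ ⟨i, rfl⟩; have := hM i; positivity⟩ k

lemma hFun_nonneg {M : ℕ → ℝ} (hM : ∀ k, 0 < M k) {t : ℝ} (ht : 0 < t) : 0 ≤ hFun M t :=
  le_ciInf fun k => by have := hM k; positivity

/-- At `t = 1 / μ n` the infimum defining `h_M t` is attained at the index `n`: consecutive terms
have ratio `μ (k + 1) / μ n`, which is at most `1` for `k < n` and at least `1` for `k ≥ n`. -/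
lemma weight_term_min {μ M : ℕ → ℝ} (hμpos : ∀ k, 0 < μ k) (hμmono : Monotone μ)
    (hMpos : ∀ k, 0 < M k) (hMsucc : ∀ k, M (k + 1) = M k * μ (k + 1)) (n k : ℕ) :
    M n * (μ n)⁻¹ ^ n ≤ M k * (μ n)⁻¹ ^ k := by
  have hn := hμpos n
  have hstep : ∀ m, M (m + 1) * (μ n)⁻¹ ^ (m + 1) = M m * (μ n)⁻¹ ^ m * (μ (m + 1) / μ n) := by
    intro m
    rw [hMsucc]
    ring
  have hpos : ∀ m, 0 ≤ M m * (μ n)⁻¹ ^ m := fun m => by have := hMpos m; positivity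
  rcases le_total n k with h | h
  · induction k, h using Nat.le_induction with
    | base => exact le_rfl
    | succ m hm ih =>
      rw [hstep]
      exact ih.trans (le_mul_of_one_le_right (hpos m)
        ((one_le_div hn).2 (hμmono (by omega))))
  · have key : ∀ m, k ≤ m → m ≤ n → M m * (μ n)⁻¹ ^ m ≤ M k * (μ n)⁻¹ ^ k := by
      intro m hm
      induction m, hm using Nat.le_induction with
      | base => exact fun _ => le_rfl
      | succ m hm ih =>
        intro hmn
        rw [hstep]
        exact (mul_le_of_le_one_right (hpos m)
          ((div_le_one hn).2 (hμmono hmn))).trans (ih (by omega))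
    exact key n h le_rfl

/-- Remark 2.5: `h_M(t) ≤ h_N(Ct)^2` for all `t > 0` is equivalent to
`M_{k+j} ≤ C^{k+j} N_j N_k`. -/
theorem stmt_2 (μ ν M N : ℕ → ℝ)
    (hμpos : ∀ k, 0 < μ k) (hμmono : Monotone μ) (hμ0 : μ 0 = 1)
    (hνpos : ∀ k, 0 < ν k) (hνmono : Monotone ν) (hν0 : ν 0 = 1)
    (hM : ∀ k, M k = ∏ i ∈ Finset.range (k + 1), μ i)
    (hN : ∀ k, N k = ∏ i ∈ Finset.range (k + 1), ν i)
    (hMws : Tendsto (fun k : ℕ => (M k) ^ (1 / (k : ℝ))) atTop atTop)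
    (hNws : Tendsto (fun k : ℕ => (N k) ^ (1 / (k : ℝ))) atTop atTop) :
    (∃ C : ℝ, 1 ≤ C ∧ ∀ t : ℝ, 0 < t → hFun M t ≤ (hFun N (C * t)) ^ 2) ↔
    (∃ C : ℝ, 1 ≤ C ∧ ∀ j k : ℕ, M (k + j) ≤ C ^ (k + j) * N j * N k) := by
  have hMpos : ∀ k, 0 < M k := fun k => by
    rw [hM]; exact Finset.prod_pos fun i _ => hμpos i
  have hNpos : ∀ k, 0 < N k := fun k => by
    rw [hN]; exact Finset.prod_pos fun i _ => hνpos i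
  have hMsucc : ∀ k, M (k + 1) = M k * μ (k + 1) := fun k => by
    rw [hM, hM, Finset.prod_range_succ]
  constructor
  · rintro ⟨C, hC, h⟩
    refine ⟨C, hC, fun j k => ?_⟩
    have hC0 : 0 < C := by linarith
    have ht : 0 < (μ (k + j))⁻¹ := inv_pos.2 (hμpos _)
    have hmin : M (k + j) * (μ (k + j))⁻¹ ^ (k + j) ≤ hFun M (μ (k + j))⁻¹ :=
      le_ciInf (weight_term_min hμpos hμmono hMpos hMsucc (k + j))
    generalize (μ (k + j))⁻¹ = t at ht hmin
    have hCt : 0 < C * t := by positivity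
    have hj := hFun_le hNpos hCt j
    have hk := hFun_le hNpos hCt k
    have hmul := mul_le_mul hj hk (hFun_nonneg hNpos hCt) ((hFun_nonneg hNpos hCt).trans hj)
    refine le_of_mul_le_mul_right ?_ (pow_pos ht (k + j))
    calc M (k + j) * t ^ (k + j) ≤ hFun N (C * t) ^ 2 := hmin.trans (h t ht)
      _ = hFun N (C * t) * hFun N (C * t) := sq _
      _ ≤ N j * (C * t) ^ j * (N k * (C * t) ^ k) := hmul
      _ = C ^ (k + j) * N j * N k * t ^ (k + j) := by ring
  · rintro ⟨C, hC, h⟩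
    refine ⟨C, hC, fun t ht => ?_⟩
    have hCt : 0 < C * t := by positivity
    have hterm : ∀ j k, hFun M t ≤ N k * (C * t) ^ k * (N j * (C * t) ^ j) := fun j k =>
      calc hFun M t ≤ M (k + j) * t ^ (k + j) := hFun_le hMpos ht _
        _ ≤ C ^ (k + j) * N j * N k * t ^ (k + j) := by gcongr; exact h j k
        _ = N k * (C * t) ^ k * (N j * (C * t) ^ j) := by ring
    have hinf : ∀ k, hFun M t ≤ N k * (C * t) ^ k * hFun N (C * t) := fun k => by
      have := hNpos k
      rw [hFun.eq_1 N, Real.mul_iInf_of_nonneg (by positivity)]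
      exact le_ciInf fun j => hterm j k
    calc hFun M t ≤ ⨅ k, hFun N (C * t) * (N k * (C * t) ^ k) :=
          le_ciInf fun k => (hinf k).trans_eq (mul_comm _ _)
      _ = hFun N (C * t) * hFun N (C * t) :=
          (Real.mul_iInf_of_nonneg (hFun_nonneg hNpos hCt) _).symm
      _ = hFun N (C * t) ^ 2 := (sq _).symm
end

section
/- Let ν = (ν_k) be an increasing positive sequence with ν_0 = 1 and ∑_k 1/ν_k < ∞, and let σ be the descendant of ν. Then σ_{k+1} ≲ σ_k holds if and only if there exists C > 0 such that for all k ∈ ℕ: ν_{k+1}/ν_k ≤ (C+1) + C (ν_{k+1}/(k+1)) ∑_{j≥k+1} 1/ν_j. In particular, σ_{k+1} ≲ σ_k holds whenever ν_{k+1} ≲ ν_k. -/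
/-!
Splitting off the first term of the tail gives `τ_k = (k+1)/ν_k + ∑_{j ≥ k+1} 1/ν_j`, for every
`k ≥ 0`. Multiplying the growth condition on `ν` by `(k+1)/ν_{k+1}` therefore turns it into
`τ_k ≤ (C+1) τ_{k+1}` with the same `C` (`growth_iff_tauSeq_le`). On the other side,
`σ_{k+1} ≤ C σ_k` means `(k+1) τ_k ≤ C k τ_{k+1}` for `k ≥ 1`, and `k ≤ k+1 ≤ 2k`, so the two
conditions agree up to a change of constant. The index `k = 0` only contributes a finite constant.
If `ν_{k+1} ≤ C ν_k`, the growth condition is immediate, since its last summand is nonnegative.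
-/

/-- The tail sum `∑_{j ≥ k} 1/ν_j`. -/
noncomputable def tailSum (ν : ℕ → ℝ) (k : ℕ) : ℝ := ∑' i : ℕ, 1 / ν (i + k)

/-- `τ_k = k/ν_k + ∑_{j ≥ k} 1/ν_j` (for `k ≥ 1`). -/
noncomputable def tauSeq (ν : ℕ → ℝ) (k : ℕ) : ℝ := (k : ℝ) / ν k + tailSum ν k

/-- The descendant `σ` of `ν`: `σ_0 = 1`, `σ_k = τ_1 k / τ_k` for `k ≥ 1`. -/
noncomputable def sigmaSeq (ν : ℕ → ℝ) : ℕ → ℝ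
  | 0 => 1
  | (k + 1) => tauSeq ν 1 * ((k : ℝ) + 1) / tauSeq ν (k + 1)

lemma tailSum_nonneg {ν : ℕ → ℝ} (hpos : ∀ k, 0 < ν k) (k : ℕ) : 0 ≤ tailSum ν k :=
  tsum_nonneg fun i => (one_div_pos.2 (hpos (i + k))).le

lemma tailSum_eq_add {ν : ℕ → ℝ} (hsum : Summable fun k => 1 / ν k) (k : ℕ) :
    tailSum ν k = 1 / ν k + tailSum ν (k + 1) := by
  have h : Summable fun i => 1 / ν (i + k) := (summable_nat_add_iff (f := fun k => 1 / ν k) k).2 hsum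
  unfold tailSum
  rw [h.tsum_eq_zero_add]
  simp only [zero_add, add_assoc, add_comm 1 k]

/-- The tails of the series at `k` and `k + 1` differ by `1/ν_k`, which is absorbed in `k/ν_k`. -/
lemma tauSeq_eq {ν : ℕ → ℝ} (hsum : Summable fun k => 1 / ν k) (k : ℕ) :
    tauSeq ν k = ((k : ℝ) + 1) / ν k + tailSum ν (k + 1) := by
  rw [tauSeq, tailSum_eq_add hsum k]
  ring

lemma tauSeq_succ_pos {ν : ℕ → ℝ} (hpos : ∀ k, 0 < ν k) (k : ℕ) : 0 < tauSeq ν (k + 1) := by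
  have h1 := hpos (k + 1)
  have h2 := tailSum_nonneg hpos (k + 1)
  unfold tauSeq
  positivity

/-- The growth condition on `ν` is a bound on the ratio `τ_k / τ_{k+1}`, with the same constant. -/
lemma growth_iff_tauSeq_le {ν : ℕ → ℝ} (hpos : ∀ k, 0 < ν k)
    (hsum : Summable fun k => 1 / ν k) (C : ℝ) (k : ℕ) :
    ν (k + 1) / ν k ≤ (C + 1) + C * (ν (k + 1) / ((k : ℝ) + 1)) * tailSum ν (k + 1) ↔
      tauSeq ν k ≤ (C + 1) * tauSeq ν (k + 1) := by
  have hs := hpos k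
  have hS := hpos (k + 1)
  have hn : (0 : ℝ) < (k : ℝ) + 1 := by positivity
  have hc : 0 < ((k : ℝ) + 1) / ν (k + 1) := by positivity
  rw [← mul_le_mul_iff_of_pos_left hc, tauSeq_eq hsum k, tauSeq]
  have e1 : ((k : ℝ) + 1) / ν (k + 1) * (ν (k + 1) / ν k) = ((k : ℝ) + 1) / ν k := by
    field_simp
  have e2 : ((k : ℝ) + 1) / ν (k + 1) *
      ((C + 1) + C * (ν (k + 1) / ((k : ℝ) + 1)) * tailSum ν (k + 1)) =
      (C + 1) * (((k : ℝ) + 1) / ν (k + 1)) + C * tailSum ν (k + 1) := by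
    field_simp
  rw [e1, e2]
  push_cast
  constructor <;> intro h <;> linarith

/-- For indices `k = m + 1 ≥ 1` the factor `τ_1` cancels from `σ_{k+1} ≤ C σ_k`. -/
lemma sigmaSeq_le_iff {ν : ℕ → ℝ} (hpos : ∀ k, 0 < ν k) (C : ℝ) (m : ℕ) :
    sigmaSeq ν (m + 1 + 1) ≤ C * sigmaSeq ν (m + 1) ↔
      ((m : ℝ) + 2) * tauSeq ν (m + 1) ≤ C * ((m : ℝ) + 1) * tauSeq ν (m + 2) := by
  have h1 : 0 < tauSeq ν 1 := tauSeq_succ_pos hpos 0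
  have h2 := tauSeq_succ_pos hpos m
  have h3 : 0 < tauSeq ν (m + 2) := tauSeq_succ_pos hpos (m + 1)
  have e1 : sigmaSeq ν (m + 1 + 1) = tauSeq ν 1 * (((m : ℝ) + 2) / tauSeq ν (m + 2)) := by
    simp only [sigmaSeq]
    push_cast
    ring
  have e2 : C * sigmaSeq ν (m + 1) = tauSeq ν 1 * (C * ((m : ℝ) + 1) / tauSeq ν (m + 1)) := by
    simp only [sigmaSeq]
    ring
  rw [e1, e2, mul_le_mul_iff_of_pos_left h1, div_le_div_iff₀ h3 h2]

/-- Lemma 4.2 (4): `σ_{k+1} ≲ σ_k` iff (4.3); in particular `σ_{k+1} ≲ σ_k` if `ν_{k+1} ≲ ν_k`. -/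
theorem stmt_5 (ν : ℕ → ℝ)
    (hpos : ∀ k, 0 < ν k) (hmono : Monotone ν) (h0 : ν 0 = 1)
    (hsum : Summable fun k => 1 / ν k) :
    ((∃ C > 0, ∀ k : ℕ, sigmaSeq ν (k + 1) ≤ C * sigmaSeq ν k) ↔
      (∃ C > 0, ∀ k : ℕ,
        ν (k + 1) / ν k ≤ (C + 1) + C * (ν (k + 1) / ((k : ℝ) + 1)) * tailSum ν (k + 1))) ∧
    ((∃ C > 0, ∀ k : ℕ, ν (k + 1) ≤ C * ν k) →
      (∃ C > 0, ∀ k : ℕ, sigmaSeq ν (k + 1) ≤ C * sigmaSeq ν k)) := by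
  have hiff : (∃ C > 0, ∀ k : ℕ, sigmaSeq ν (k + 1) ≤ C * sigmaSeq ν k) ↔
      (∃ C > 0, ∀ k : ℕ,
        ν (k + 1) / ν k ≤ (C + 1) + C * (ν (k + 1) / ((k : ℝ) + 1)) * tailSum ν (k + 1)) := by
    simp only [growth_iff_tauSeq_le hpos hsum]
    constructor
    · rintro ⟨C, hC, h⟩
      have ht1 : 0 < tauSeq ν 1 := tauSeq_succ_pos hpos 0
      have ht0 : 0 ≤ tauSeq ν 0 := by
        simpa [tauSeq] using tailSum_nonneg hpos 0
      have hq : 0 ≤ tauSeq ν 0 / tauSeq ν 1 := by positivity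
      -- The summand `τ_0 / τ_1` takes care of `k = 0`, where `σ_0 = 1` carries no information.
      refine ⟨C + tauSeq ν 0 / tauSeq ν 1, by positivity, fun k => ?_⟩
      cases k with
      | zero =>
        have e : tauSeq ν 0 / tauSeq ν 1 * tauSeq ν 1 = tauSeq ν 0 := by field_simp
        simp only [zero_add]
        nlinarith [mul_pos hC ht1]
      | succ m =>
        have h' := (sigmaSeq_le_iff hpos C m).1 (h (m + 1))
        have ht : 0 < tauSeq ν (m + 2) := tauSeq_succ_pos hpos (m + 1)
        have hm : (0 : ℝ) < (m : ℝ) + 2 := by positivity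
        have h2 : tauSeq ν (m + 1) ≤ C * tauSeq ν (m + 2) := by
          refine le_of_mul_le_mul_left ?_ hm
          nlinarith [mul_pos hC ht]
        have h3 := mul_nonneg hq ht.le
        change tauSeq ν (m + 1) ≤ _ * tauSeq ν (m + 2)
        linarith
    · rintro ⟨C, hC, h⟩
      -- The factor `2` comes from `k + 1 ≤ 2 k` for `k ≥ 1`.
      refine ⟨2 * (C + 1), by positivity, fun k => ?_⟩
      cases k with
      | zero =>
        have ht1 : tauSeq ν 1 ≠ 0 := (tauSeq_succ_pos hpos 0).ne'
        simp only [sigmaSeq, Nat.cast_zero, zero_add, mul_one, div_self ht1]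
        linarith
      | succ m =>
        rw [sigmaSeq_le_iff hpos]
        have ht : 0 < tauSeq ν (m + 2) := tauSeq_succ_pos hpos (m + 1)
        have hp : 0 < (C + 1) * tauSeq ν (m + 2) := by positivity
        have hm : (0 : ℝ) ≤ (m : ℝ) := by positivity
        calc ((m : ℝ) + 2) * tauSeq ν (m + 1)
            ≤ ((m : ℝ) + 2) * ((C + 1) * tauSeq ν (m + 2)) :=
              mul_le_mul_of_nonneg_left (h (m + 1)) (by positivity)
          _ ≤ (2 * ((m : ℝ) + 1)) * ((C + 1) * tauSeq ν (m + 2)) :=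
              mul_le_mul_of_nonneg_right (by linarith) hp.le
          _ = 2 * (C + 1) * ((m : ℝ) + 1) * tauSeq ν (m + 2) := by ring
  refine ⟨hiff, ?_⟩
  rintro ⟨C, hC, h⟩
  refine hiff.2 ⟨C, hC, fun k => ?_⟩
  have h1 : ν (k + 1) / ν k ≤ C := (div_le_iff₀ (hpos k)).2 (h k)
  have h2 := tailSum_nonneg hpos (k + 1)
  have h3 := hpos (k + 1)
  have h4 : 0 ≤ C * (ν (k + 1) / ((k : ℝ) + 1)) * tailSum ν (k + 1) := by positivity
  linarith
end

section
/- Let ν = (ν_k) and ν̇ = (ν̇_k) be increasing positive sequences with ν_0 = ν̇_0 = 1, ∑_k 1/ν_k < ∞, and ∑_k 1/ν̇_k < ∞, and let σ and σ̇ be their respective descendants. If ν_{2k} ≲ ν̇_k, then σ_{2k} ≲ σ̇_k. -/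
lemma summable_shift {ν : ℕ → ℝ} (hs : Summable fun k => 1 / ν k) (k : ℕ) :
    Summable fun i => 1 / ν (i + k) :=
  hs.comp_injective (i := fun i => i + k) (add_left_injective k)

lemma tauSeq_pos {ν : ℕ → ℝ} (hpos : ∀ k, 0 < ν k) (hs : Summable fun k => 1 / ν k) (k : ℕ) :
    0 < tauSeq ν k := by
  have h1 : 0 < tailSum ν k :=
    (summable_shift hs k).tsum_pos (fun i => (one_div_pos.2 (hpos _)).le) 0
      (one_div_pos.2 (hpos _))
  have h2 : 0 ≤ (k : ℝ) / ν k := div_nonneg k.cast_nonneg (hpos k).le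
  unfold tauSeq
  linarith

lemma one_div_le_of_comp {ν ν' : ℕ → ℝ} (hpos : ∀ k, 0 < ν k) (hpos' : ∀ k, 0 < ν' k)
    {C : ℝ} (hC : ∀ k : ℕ, ν (2 * k) ≤ C * ν' k) (k : ℕ) :
    1 / ν' k ≤ C * (1 / ν (2 * k)) := by
  rw [mul_one_div, div_le_div_iff₀ (hpos' k) (hpos _), one_mul]
  exact hC k

lemma tailSum_le_of_comp {ν ν' : ℕ → ℝ} (hpos : ∀ k, 0 < ν k) (hs : Summable fun k => 1 / ν k)
    (hpos' : ∀ k, 0 < ν' k) (hs' : Summable fun k => 1 / ν' k)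
    {C : ℝ} (hC0 : 0 < C) (hC : ∀ k : ℕ, ν (2 * k) ≤ C * ν' k) (k : ℕ) :
    tailSum ν' k ≤ C * tailSum ν (2 * k) := by
  unfold tailSum
  rw [← tsum_mul_left]
  -- The even indices `2(i + k) = 2i + 2k` form a subfamily of the indices `≥ 2k`.
  refine Summable.tsum_le_tsum_of_inj (fun i => 2 * i) (fun a b h => by simpa using h)
    (fun c _ => mul_nonneg hC0.le (one_div_pos.2 (hpos _)).le) (fun i => ?_)
    (summable_shift hs' k) ((summable_shift hs (2 * k)).mul_left C)
  simpa only [mul_add] using one_div_le_of_comp hpos hpos' hC (i + k)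

lemma tauSeq_le_of_comp {ν ν' : ℕ → ℝ} (hpos : ∀ k, 0 < ν k) (hs : Summable fun k => 1 / ν k)
    (hpos' : ∀ k, 0 < ν' k) (hs' : Summable fun k => 1 / ν' k)
    {C : ℝ} (hC0 : 0 < C) (hC : ∀ k : ℕ, ν (2 * k) ≤ C * ν' k) (k : ℕ) :
    tauSeq ν' k ≤ C * tauSeq ν (2 * k) := by
  have h1 := tailSum_le_of_comp hpos hs hpos' hs' hC0 hC k
  have h2 : (k : ℝ) / ν' k ≤ C * (((2 * k : ℕ) : ℝ) / ν (2 * k)) := by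
    have h3 := mul_le_mul_of_nonneg_left (one_div_le_of_comp hpos hpos' hC k)
      (Nat.cast_nonneg (α := ℝ) k)
    have h4 : 0 ≤ (k : ℝ) * (C * (1 / ν (2 * k))) :=
      mul_nonneg k.cast_nonneg (mul_nonneg hC0.le (one_div_pos.2 (hpos _)).le)
    calc (k : ℝ) / ν' k = k * (1 / ν' k) := by ring
      _ ≤ 2 * (k * (C * (1 / ν (2 * k)))) := by linarith
      _ = _ := by push_cast; ring
  unfold tauSeq
  linarith

lemma sigmaSeq_of_pos (ν : ℕ → ℝ) {k : ℕ} (hk : 0 < k) :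
    sigmaSeq ν k = tauSeq ν 1 * k / tauSeq ν k := by
  obtain ⟨m, rfl⟩ := Nat.exists_eq_succ_of_ne_zero hk.ne'
  simp [sigmaSeq]

/-- Lemma 4.2 (6): `ν_{2k} ≲ ν̇_k` implies `σ_{2k} ≲ σ̇_k` for the descendants. -/
theorem stmt_7 (ν ν' : ℕ → ℝ)
    (hνpos : ∀ k, 0 < ν k) (hνmono : Monotone ν) (hν0 : ν 0 = 1)
    (hνsum : Summable fun k => 1 / ν k)
    (hν'pos : ∀ k, 0 < ν' k) (hν'mono : Monotone ν') (hν'0 : ν' 0 = 1)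
    (hν'sum : Summable fun k => 1 / ν' k)
    (hcomp : ∃ C > 0, ∀ k : ℕ, ν (2 * k) ≤ C * ν' k) :
    ∃ C > 0, ∀ k : ℕ, sigmaSeq ν (2 * k) ≤ C * sigmaSeq ν' k := by
  obtain ⟨C, hC0, hC⟩ := hcomp
  have ht := tauSeq_pos hνpos hνsum
  have ht' := tauSeq_pos hν'pos hν'sum
  have hD : 0 < 2 * C * tauSeq ν 1 / tauSeq ν' 1 :=
    div_pos (mul_pos (mul_pos two_pos hC0) (ht 1)) (tauSeq_pos hν'pos hν'sum 1)
  -- The summand `1` takes care of `k = 0`, where both descendants equal `1`.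
  refine ⟨2 * C * tauSeq ν 1 / tauSeq ν' 1 + 1, by linarith, fun k => ?_⟩
  rcases Nat.eq_zero_or_pos k with rfl | hk
  · simp only [sigmaSeq]
    linarith
  · rw [sigmaSeq_of_pos ν (by omega : 0 < 2 * k), sigmaSeq_of_pos ν' hk]
    have hle := tauSeq_le_of_comp hνpos hνsum hν'pos hν'sum hC0 hC k
    have hσ : 0 ≤ tauSeq ν' 1 * k / tauSeq ν' k :=
      div_nonneg (mul_nonneg (ht' 1).le k.cast_nonneg) (ht' k).le
    have hN : 0 ≤ tauSeq ν 1 * ((2 * k : ℕ) : ℝ) := mul_nonneg (ht 1).le (Nat.cast_nonneg _)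
    have hmain : tauSeq ν 1 * ((2 * k : ℕ) : ℝ) / tauSeq ν (2 * k)
        ≤ 2 * C * tauSeq ν 1 / tauSeq ν' 1 * (tauSeq ν' 1 * k / tauSeq ν' k) := by
      calc tauSeq ν 1 * ((2 * k : ℕ) : ℝ) / tauSeq ν (2 * k)
          ≤ tauSeq ν 1 * ((2 * k : ℕ) : ℝ) * C / tauSeq ν' k := by
            rw [div_le_div_iff₀ (ht _) (ht' k), mul_assoc _ C]
            exact mul_le_mul_of_nonneg_left hle hN
        _ = _ := by
            have h1 := (ht' 1).ne'
            have h2 := (ht' k).ne'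
            push_cast
            field_simp
    rw [add_mul, one_mul]
    linarith
end
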